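/- Let X be a two-dimensional polyhedral real Banach space whose closed unit ball has extreme points ±v₁, ±v₂, …, ±v_m. Then J(X) = max{β(vᵢ) : 1 ≤ i ≤ m}; equivalently, J(X) = max{‖vᵢ + wᵢ‖ : 1 ≤ i ≤ m, wᵢ ∈ S_X, vᵢ ⊥_I wᵢ}. -/

import Mathlib

/-!
Let `f (x, y) = min ‖x + y‖ ‖x - y‖`, let `M` be its maximum over pairs of unit vectors, attained
at `(p, q)`, and let `φ`, `ψ` be norming functionals of `p + q` and `p - q`. Replace the sphere by
faces `F ∋ p` and `G ∋ q` of the ball: the points of `F × G` with `φ (x + y) ≥ M` and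
`ψ (x - y) ≥ M` form a compact convex set of maximizers of `f`, which has an extreme point `(x, y)`.
If neither `x` nor `y` were an extreme point of the ball, `(x, y)` could be moved inside `F × G` in
a two-parameter family of directions. Two constraints cannot block such a family: either both
quantities can be increased at once, against maximality, or both stay constant in some direction,
against extremality.

So `M` is attained at some `(v, y)` with `v` extreme. Rotating `y` (or `-y`, if it is closer to `v`)
towards `-v` until it is isosceles orthogonal to `v` does not decrease its distance to `v`, by
monotonicity of that distance along the unit sphere.
-/

open Set Metric

section ExtremePoints

variable {E : Type*} [AddCommGroup E] [Module ℝ E] {A : Set E} {x d : E}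

theorem add_smul_mem_of_abs_le_one (hA : Convex ℝ A) (hadd : x + d ∈ A) (hsub : x - d ∈ A) {t : ℝ}
    (ht : |t| ≤ 1) : x + t • d ∈ A := by
  obtain ⟨hneg, hpos⟩ := abs_le.1 ht
  have hmem := hA hadd hsub (a := (1 + t) / 2) (b := (1 - t) / 2) (by linarith) (by linarith)
    (by ring)
  convert hmem using 1
  module

theorem mem_extremePoints_iff_forall_add_sub (hA : Convex ℝ A) :
    x ∈ A.extremePoints ℝ ↔ x ∈ A ∧ ∀ d, x + d ∈ A → x - d ∈ A → d = 0 := by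
  constructor
  · refine fun hx => ⟨hx.1, fun d hadd hsub => ?_⟩
    have hmid : x ∈ openSegment ℝ (x + d) (x - d) :=
      ⟨1 / 2, 1 / 2, by norm_num, by norm_num, by norm_num, by module⟩
    exact left_eq_add.1 (hx.2 hadd hsub hmid).symm
  · refine fun ⟨hxA, hx⟩ => mem_extremePoints_iff_left.2 ⟨hxA, ?_⟩
    rintro a ha b hb ⟨s, t, hs, ht, hst, rfl⟩
    have hmin : min s t • (a - b) = 0 := by
      refine hx _ ?_ ?_
      · convert hA ha hb (a := s + min s t) (b := t - min s t) (by positivity)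
          (sub_nonneg.2 (min_le_right s t)) (by linarith) using 1
        module
      · convert hA ha hb (a := s - min s t) (b := t + min s t)
          (sub_nonneg.2 (min_le_left s t)) (by positivity) (by linarith) using 1
        module
    have hab : a = b := sub_eq_zero.1 ((smul_eq_zero.1 hmin).resolve_left (lt_min hs ht).ne')
    rw [← hab, Convex.combo_self hst]

end ExtremePoints

theorem exists_ne_zero_norm_le_one_map_eq_pos_smul {V : Type*} [NormedAddCommGroup V]
    [NormedSpace ℝ V] [FiniteDimensional ℝ V] (L : V →ₗ[ℝ] V) {w : V} (hw : w ≠ 0) :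
    ∃ u : V, u ≠ 0 ∧ ‖u‖ ≤ 1 ∧ (L u = 0 ∨ ∃ c : ℝ, 0 < c ∧ L u = c • w) := by
  obtain ⟨u, hu, hLu⟩ : ∃ u : V, u ≠ 0 ∧ (L u = 0 ∨ L u = w) := by
    by_cases hL : Function.Injective L
    · obtain ⟨u, rfl⟩ := LinearMap.injective_iff_surjective.1 hL w
      exact ⟨u, fun hu => hw (by rw [hu, map_zero]), .inr rfl⟩
    · rw [injective_iff_map_eq_zero] at hL
      push Not at hL
      obtain ⟨u, hLu, hu⟩ := hL
      exact ⟨u, hu, .inl hLu⟩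
  have hpos : 0 < ‖u‖⁻¹ := inv_pos.2 (norm_pos_iff.2 hu)
  refine ⟨‖u‖⁻¹ • u, smul_ne_zero hpos.ne' hu, (norm_smul_inv_norm hu).le, ?_⟩
  rw [map_smul]
  exact hLu.imp (fun h => by rw [h, smul_zero]) (fun h => ⟨_, hpos, by rw [h]⟩)

section Product

variable {X Y : Type*} [NormedAddCommGroup X] [NormedSpace ℝ X] [NormedAddCommGroup Y]
  [NormedSpace ℝ Y] {F : Set X} {G : Set Y}

theorem exists_ne_zero_add_sub_mem_prod (hF : Convex ℝ F) (hG : Convex ℝ G)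
    (φ ψ : X × Y →ₗ[ℝ] ℝ) {z : X × Y} (hz : z ∈ F ×ˢ G) (hx : z.1 ∉ F.extremePoints ℝ)
    (hy : z.2 ∉ G.extremePoints ℝ) :
    ∃ δ ≠ 0, z + δ ∈ F ×ˢ G ∧ z - δ ∈ F ×ˢ G ∧ (φ δ = 0 ∧ ψ δ = 0 ∨ 0 < φ δ ∧ 0 < ψ δ) := by
  simp only [mem_extremePoints_iff_forall_add_sub hF, hz.1, true_and, not_forall] at hx
  simp only [mem_extremePoints_iff_forall_add_sub hG, hz.2, true_and, not_forall] at hy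
  obtain ⟨d, hd_add, hd_sub, hd⟩ := hx
  obtain ⟨e, he_add, he_sub, he⟩ := hy
  let D : ℝ × ℝ →ₗ[ℝ] X × Y :=
    (LinearMap.toSpanSingleton ℝ X d).prodMap (LinearMap.toSpanSingleton ℝ Y e)
  have hD_mem : ∀ u : ℝ × ℝ, ‖u‖ ≤ 1 → z + D u ∈ F ×ˢ G := fun u hu =>
    ⟨add_smul_mem_of_abs_le_one hF hd_add hd_sub ((norm_fst_le u).trans hu),
      add_smul_mem_of_abs_le_one hG he_add he_sub ((norm_snd_le u).trans hu)⟩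
  obtain ⟨u, hu, hu_le, hDu⟩ := exists_ne_zero_norm_le_one_map_eq_pos_smul
    ((φ.prod ψ).comp D) (w := ((1, 1) : ℝ × ℝ)) (by simp)
  refine ⟨D u, fun h => hu ?_, hD_mem u hu_le, ?_, ?_⟩
  · have h' : u.1 • d = 0 ∧ u.2 • e = 0 := Prod.ext_iff.1 h
    exact Prod.ext ((smul_eq_zero.1 h'.1).resolve_right hd) ((smul_eq_zero.1 h'.2).resolve_right he)
  · simpa only [map_neg, ← sub_eq_add_neg] using hD_mem (-u) (by rwa [norm_neg])
  · refine hDu.imp (fun h => Prod.ext_iff.1 h) ?_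
    rintro ⟨c, hc, h⟩
    have h' : φ (D u) = c * 1 ∧ ψ (D u) = c * 1 := Prod.ext_iff.1 h
    rw [h'.1, h'.2, mul_one]
    exact ⟨hc, hc⟩

theorem exists_mem_prod_fst_or_snd_mem_extremePoints (hF : Convex ℝ F) (hFc : IsCompact F)
    (hG : Convex ℝ G) (hGc : IsCompact G) (φ ψ : StrongDual ℝ (X × Y)) {a b : ℝ}
    (hne : ∃ z ∈ F ×ˢ G, a ≤ φ z ∧ b ≤ ψ z) (hmax : ∀ z ∈ F ×ˢ G, φ z ≤ a ∨ ψ z ≤ b) :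
    ∃ z ∈ F ×ˢ G, a ≤ φ z ∧ b ≤ ψ z ∧
      (z.1 ∈ F.extremePoints ℝ ∨ z.2 ∈ G.extremePoints ℝ) := by
  let K : Set (X × Y) := F ×ˢ G ∩ ({z | a ≤ φ z} ∩ {z | b ≤ ψ z})
  have hK : Convex ℝ K := (hF.prod hG).inter
    ((convex_halfSpace_ge φ.isLinear a).inter (convex_halfSpace_ge ψ.isLinear b))
  have hKc : IsCompact K := (hFc.prod hGc).inter_right
    ((isClosed_le continuous_const φ.continuous).inter (isClosed_le continuous_const ψ.continuous))
  obtain ⟨z, hz⟩ := hKc.extremePoints_nonempty hne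
  obtain ⟨⟨hzFG, hφ, hψ⟩, hz⟩ := (mem_extremePoints_iff_forall_add_sub hK).1 hz
  simp only [mem_ofPred_eq] at hφ hψ
  refine ⟨z, hzFG, hφ, hψ, ?_⟩
  by_contra! hnot
  obtain ⟨δ, hδ, hadd, hsub, ⟨hφδ, hψδ⟩ | ⟨hφδ, hψδ⟩⟩ :=
    exists_ne_zero_add_sub_mem_prod hF hG φ ψ hzFG hnot.1 hnot.2
  · simp only [ContinuousLinearMap.coe_coe] at hφδ hψδ
    refine hδ (hz δ ⟨hadd, ?_, ?_⟩ ⟨hsub, ?_, ?_⟩) <;> simpa [hφδ, hψδ]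
  · simp only [ContinuousLinearMap.coe_coe] at hφδ hψδ
    have hle := hmax _ hadd
    simp only [map_add] at hle
    rcases hle with hle | hle <;> linarith

end Product

section Norm

variable {X : Type*} [NormedAddCommGroup X] [NormedSpace ℝ X]

theorem exists_dual_eq_norm_forall_le_norm (x : X) :
    ∃ f : StrongDual ℝ X, f x = ‖x‖ ∧ ∀ y, f y ≤ ‖y‖ := by
  obtain ⟨f, hf, hfx⟩ := exists_dual_vector'' ℝ x
  exact ⟨f, hfx, fun y => (le_abs_self _).trans (by simpa using f.le_of_opNorm_le hf y)⟩

theorem exists_isExposed_closedBall_subset_sphere {x : X} (hx : ‖x‖ = 1) :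
    ∃ F, IsExposed ℝ (closedBall (0 : X) 1) F ∧ x ∈ F ∧ F ⊆ sphere 0 1 := by
  obtain ⟨f, hfx, hf⟩ := exists_dual_eq_norm_forall_le_norm x
  have hx_mem : x ∈ closedBall (0 : X) 1 := mem_closedBall_zero_iff.2 hx.le
  refine ⟨f.toExposed (closedBall 0 1), ContinuousLinearMap.toExposed.isExposed,
    ⟨hx_mem, fun y hy => ?_⟩, ?_⟩
  · rw [hfx, hx]
    exact (hf y).trans (mem_closedBall_zero_iff.1 hy)
  · rintro y ⟨hy, hmax⟩
    rw [mem_sphere_zero_iff_norm]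
    refine (mem_closedBall_zero_iff.1 hy).antisymm ?_
    calc 1 = f x := by rw [hfx, hx]
      _ ≤ f y := hmax x hx_mem
      _ ≤ ‖y‖ := hf y

theorem dist_add_dist_le_of_mem_segment {a b c d p : X} (hac : p ∈ segment ℝ a c)
    (hbd : p ∈ segment ℝ b d) : dist a b + dist c d ≤ dist a c + dist b d := by
  rw [← dist_add_dist_of_mem_segment hac, ← dist_add_dist_of_mem_segment hbd]
  linarith [dist_triangle a p b, dist_triangle c p d, dist_comm p b, dist_comm c p]

/-- The monotonicity lemma for normed planes: `h` says that `y` lies in the angle between `v` and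
`w`. -/
theorem norm_sub_le_norm_sub_of_smul_eq {v y w : X} (hv : ‖v‖ = 1) (hy : ‖y‖ = 1) (hw : ‖w‖ = 1)
    {a b c : ℝ} (ha : 0 ≤ a) (hb : 0 ≤ b) (hc : 0 ≤ c) (hab : 0 < a + b)
    (h : c • y = a • v + b • w) : ‖v - y‖ ≤ ‖v - w‖ := by
  have hc_le : c ≤ a + b := by
    have hnorm := norm_add_le (a • v) (b • w)
    rwa [← h, norm_smul_of_nonneg ha, norm_smul_of_nonneg hb, norm_smul_of_nonneg hc, hv, hy, hw,
      mul_one, mul_one, mul_one] at hnorm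
  -- The segments `[v, w]` and `[y, 0]` cross, as the diagonals of the quadrilateral `v y w 0`.
  have hvw : (c / (a + b)) • y ∈ segment ℝ v w := by
    refine ⟨a / (a + b), b / (a + b), by positivity, by positivity, by field_simp, ?_⟩
    rw [div_eq_inv_mul, div_eq_inv_mul, div_eq_inv_mul, mul_smul, mul_smul, mul_smul, h, smul_add]
  have hy0 : (c / (a + b)) • y ∈ segment ℝ y 0 :=
    ⟨c / (a + b), 1 - c / (a + b), by positivity, sub_nonneg.2 (div_le_one_of_le₀ hc_le hab.le),
      by ring, by rw [smul_zero, add_zero]⟩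
  have hquad := dist_add_dist_le_of_mem_segment hvw hy0
  rw [dist_zero_right, dist_zero_right, dist_eq_norm, dist_eq_norm, hy, hw] at hquad
  linarith

end Norm

/-- The James constant `J(X)`, which measures how far `X` is from failing to be uniformly
non-square. The supremum is `0` by convention if `X` has no unit vectors. -/
noncomputable def jamesConst (X : Type*) [NormedAddCommGroup X] : ℝ :=
  sSup {r : ℝ | ∃ x y : X, ‖x‖ = 1 ∧ ‖y‖ = 1 ∧ r = min ‖x + y‖ ‖x - y‖}

/-- The local James constant `β(x)`: the James constant with one of the two vectors fixed. -/
noncomputable def localJamesConst {X : Type*} [NormedAddCommGroup X] (x : X) : ℝ :=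
  sSup {s : ℝ | ∃ y : X, ‖y‖ = 1 ∧ s = min ‖x + y‖ ‖x - y‖}

/-- Isosceles orthogonality `x ⊥_I y`, James's substitute for orthogonality in a normed space. -/
def IsoscelesOrthogonal {X : Type*} [NormedAddCommGroup X] (x y : X) : Prop :=
  ‖x + y‖ = ‖x - y‖

section JamesConst

variable {X : Type*} [NormedAddCommGroup X] {x y : X}

theorem min_norm_add_sub_le_jamesConst (hx : ‖x‖ = 1) (hy : ‖y‖ = 1) :
    min ‖x + y‖ ‖x - y‖ ≤ jamesConst X := by
  refine le_csSup ⟨1 + 1, ?_⟩ ⟨x, y, hx, hy, rfl⟩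
  rintro r ⟨a, b, ha, hb, rfl⟩
  exact (min_le_left _ _).trans (norm_add_le_of_le ha.le hb.le)

theorem min_norm_add_sub_le_localJamesConst (x : X) (hy : ‖y‖ = 1) :
    min ‖x + y‖ ‖x - y‖ ≤ localJamesConst x := by
  refine le_csSup ⟨‖x‖ + 1, ?_⟩ ⟨y, hy, rfl⟩
  rintro r ⟨b, hb, rfl⟩
  exact (min_le_left _ _).trans (norm_add_le_of_le le_rfl hb.le)

theorem localJamesConst_le_jamesConst (hx : ‖x‖ = 1) : localJamesConst x ≤ jamesConst X := by
  refine csSup_le ⟨_, x, hx, rfl⟩ ?_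
  rintro r ⟨y, hy, rfl⟩
  exact min_norm_add_sub_le_jamesConst hx hy

theorem IsoscelesOrthogonal.norm_add_le_jamesConst (h : IsoscelesOrthogonal x y) (hx : ‖x‖ = 1)
    (hy : ‖y‖ = 1) : ‖x + y‖ ≤ jamesConst X :=
  (le_min le_rfl h.le).trans (min_norm_add_sub_le_jamesConst hx hy)

variable [NormedSpace ℝ X]

theorem exists_isoscelesOrthogonal_norm_sub_le_norm_add (hx : ‖x‖ = 1) (hy : ‖y‖ = 1)
    (hlt : 0 < ‖x - y‖) (hle : ‖x - y‖ ≤ ‖x + y‖) :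
    ∃ w : X, ‖w‖ = 1 ∧ IsoscelesOrthogonal x w ∧ ‖x - y‖ ≤ ‖x + w‖ := by
  let z : ℝ → X := fun l => (1 - l) • y - l • x
  let w : ℝ → X := fun l => ‖z l‖⁻¹ • z l
  have hz : ∀ l ∈ Icc (0 : ℝ) 1, z l ≠ 0 := by
    rintro l ⟨hl0, hl1⟩ hzl
    have heq : (1 - l) • y = l • x := sub_eq_zero.1 hzl
    have hnorm := congrArg norm heq
    rw [norm_smul_of_nonneg (sub_nonneg.2 hl1), norm_smul_of_nonneg hl0, hx, hy] at hnorm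
    obtain rfl : l = 1 / 2 := by linarith
    rw [show (1 - 1 / 2 : ℝ) = 1 / 2 by norm_num, smul_right_inj (by norm_num)] at heq
    exact hlt.ne' (by rw [heq, sub_self, norm_zero])
  have hz_cont : Continuous z := by fun_prop
  have hw_cont : ContinuousOn w (Icc 0 1) :=
    (hz_cont.norm.continuousOn.inv₀ fun l hl => norm_ne_zero_iff.2 (hz l hl)).smul
      hz_cont.continuousOn
  have hw0 : w 0 = y := by simp [w, z, hy]
  have hw1 : w 1 = -x := by simp [w, z, hx]
  obtain ⟨l, hl, heq⟩ := isPreconnected_Icc.intermediate_value₂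
    (left_mem_Icc.2 zero_le_one) (right_mem_Icc.2 zero_le_one)
    (continuousOn_const.sub hw_cont).norm (continuousOn_const.add hw_cont).norm
    (show ‖x - w 0‖ ≤ ‖x + w 0‖ by rwa [hw0])
    (show ‖x + w 1‖ ≤ ‖x - w 1‖ by rw [hw1, add_neg_cancel, norm_zero]; exact norm_nonneg _)
  have hNw : ‖z l‖ • w l = z l := smul_inv_smul₀ (norm_ne_zero_iff.2 (hz l hl)) _
  have hw : ‖w l‖ = 1 := norm_smul_inv_norm (hz l hl)
  refine ⟨w l, hw, heq.symm, heq ▸ norm_sub_le_norm_sub_of_smul_eq hx hy hw hl.1 (norm_nonneg (z l))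
    (sub_nonneg.2 hl.2) (add_pos_of_nonneg_of_pos hl.1 (norm_pos_iff.2 (hz l hl))) ?_⟩
  rw [hNw, add_sub_cancel]

theorem exists_isoscelesOrthogonal_min_le_norm_add (hx : ‖x‖ = 1) (hy : ‖y‖ = 1)
    (hpos : 0 < min ‖x + y‖ ‖x - y‖) :
    ∃ w : X, ‖w‖ = 1 ∧ IsoscelesOrthogonal x w ∧ min ‖x + y‖ ‖x - y‖ ≤ ‖x + w‖ := by
  rcases le_total ‖x - y‖ ‖x + y‖ with hle | hle
  · rw [min_eq_right hle] at hpos ⊢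
    exact exists_isoscelesOrthogonal_norm_sub_le_norm_add hx hy hpos hle
  · rw [min_eq_left hle] at hpos ⊢
    rw [← sub_neg_eq_add] at hpos hle ⊢
    rw [sub_eq_add_neg x y] at hle
    exact exists_isoscelesOrthogonal_norm_sub_le_norm_add hx (by rwa [norm_neg]) hpos hle

theorem jamesConst_pos (hrank : 1 < Module.rank ℝ X) : 0 < jamesConst X := by
  have : Nontrivial X := rank_pos_iff_nontrivial.1 (zero_lt_one.trans hrank)
  obtain ⟨x, hx⟩ := exists_norm_eq X zero_le_one
  have hx0 : x ≠ 0 := norm_ne_zero_iff.1 (by rw [hx]; exact one_ne_zero)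
  obtain ⟨y, hxy⟩ := exists_linearIndependent_pair_of_one_lt_rank hrank hx0
  rw [LinearIndependent.pair_iff] at hxy
  have hy0 : y ≠ 0 := by
    rintro rfl
    simpa using hxy 0 1 (by simp)
  have hne : ∀ c : ℝ, x + c • y ≠ 0 := fun c h => by simpa using hxy 1 c (by rwa [one_smul])
  refine lt_of_lt_of_le (lt_min ?_ ?_)
    (min_norm_add_sub_le_jamesConst hx (norm_smul_inv_norm (𝕜 := ℝ) hy0))
  · exact norm_pos_iff.2 (hne _)
  · rw [sub_eq_add_neg, ← neg_smul]
    exact norm_pos_iff.2 (hne _)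

variable (X) [FiniteDimensional ℝ X] [Nontrivial X]

theorem exists_min_norm_add_sub_eq_jamesConst :
    ∃ p q : X, ‖p‖ = 1 ∧ ‖q‖ = 1 ∧ min ‖p + q‖ ‖p - q‖ = jamesConst X := by
  have : ProperSpace X := FiniteDimensional.proper ℝ X
  have hne : (sphere (0 : X) 1).Nonempty := NormedSpace.sphere_nonempty.2 zero_le_one
  obtain ⟨⟨p, q⟩, ⟨hp, hq⟩, hmax⟩ :=
    ((isCompact_sphere (0 : X) 1).prod (isCompact_sphere (0 : X) 1)).exists_isMaxOn (hne.prod hne)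
      (f := fun z : X × X => min ‖z.1 + z.2‖ ‖z.1 - z.2‖) (by fun_prop)
  rw [mem_sphere_zero_iff_norm] at hp hq
  refine ⟨p, q, hp, hq, Eq.symm (IsGreatest.csSup_eq ⟨⟨p, q, hp, hq, rfl⟩, ?_⟩)⟩
  rintro r ⟨a, b, ha, hb, rfl⟩
  exact hmax (mk_mem_prod (mem_sphere_zero_iff_norm.2 ha) (mem_sphere_zero_iff_norm.2 hb))

theorem exists_mem_extremePoints_min_norm_add_sub_eq_jamesConst :
    ∃ x ∈ (closedBall (0 : X) 1).extremePoints ℝ, ∃ y, ‖y‖ = 1 ∧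
      min ‖x + y‖ ‖x - y‖ = jamesConst X := by
  have : ProperSpace X := FiniteDimensional.proper ℝ X
  have hball : Convex ℝ (closedBall (0 : X) 1) := convex_closedBall 0 1
  have hballc : IsCompact (closedBall (0 : X) 1) := isCompact_closedBall 0 1
  obtain ⟨p, q, hp, hq, hpq⟩ := exists_min_norm_add_sub_eq_jamesConst X
  obtain ⟨F, hF, hpF, hFS⟩ := exists_isExposed_closedBall_subset_sphere hp
  obtain ⟨G, hG, hqG, hGS⟩ := exists_isExposed_closedBall_subset_sphere hq
  obtain ⟨φ, hφ, hφ_le⟩ := exists_dual_eq_norm_forall_le_norm (p + q)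
  obtain ⟨ψ, hψ, hψ_le⟩ := exists_dual_eq_norm_forall_le_norm (p - q)
  have hunit : ∀ z ∈ F ×ˢ G, ‖z.1‖ = 1 ∧ ‖z.2‖ = 1 := fun z hz =>
    ⟨mem_sphere_zero_iff_norm.1 (hFS hz.1), mem_sphere_zero_iff_norm.1 (hGS hz.2)⟩
  obtain ⟨⟨x, y⟩, hxy, hφxy, hψxy, hext⟩ := exists_mem_prod_fst_or_snd_mem_extremePoints
    (hF.convex hball) (hF.isCompact hballc) (hG.convex hball) (hG.isCompact hballc)
    (φ.comp (ContinuousLinearMap.fst ℝ X X + ContinuousLinearMap.snd ℝ X X))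
    (ψ.comp (ContinuousLinearMap.fst ℝ X X - ContinuousLinearMap.snd ℝ X X))
    (a := jamesConst X) (b := jamesConst X)
    ⟨(p, q), ⟨hpF, hqG⟩, (hpq.ge.trans (min_le_left _ _)).trans hφ.ge,
      (hpq.ge.trans (min_le_right _ _)).trans hψ.ge⟩
    (fun z hz => (min_le_iff.1 (min_norm_add_sub_le_jamesConst (hunit z hz).1 (hunit z hz).2)).imp
      (hφ_le _).trans (hψ_le _).trans)
  obtain ⟨hx, hy⟩ := hunit _ hxy
  have hmin : min ‖x + y‖ ‖x - y‖ = jamesConst X :=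
    (min_norm_add_sub_le_jamesConst hx hy).antisymm
      (le_min (hφxy.trans (hφ_le _)) (hψxy.trans (hψ_le _)))
  rcases hext with hext | hext
  · exact ⟨x, hF.isExtreme.extremePoints_subset_extremePoints hext, y, hy, hmin⟩
  · exact ⟨y, hG.isExtreme.extremePoints_subset_extremePoints hext, x, hx,
      by rw [add_comm, norm_sub_rev, hmin]⟩

end JamesConst

theorem stmt10_general {X : Type*} [NormedAddCommGroup X] [NormedSpace ℝ X]
    (hdim : 1 < Module.finrank ℝ X) {ι : Type*} (v : ι → X) (hv : ∀ i, ‖v i‖ = 1)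
    (hext : (closedBall (0 : X) 1).extremePoints ℝ ⊆ {x | ∃ i, x = v i ∨ x = -v i}) :
    IsGreatest {r : ℝ | ∃ i, r = localJamesConst (v i)} (jamesConst X) ∧
    IsGreatest {r : ℝ | ∃ i, ∃ w : X, ‖w‖ = 1 ∧ IsoscelesOrthogonal (v i) w ∧ r = ‖v i + w‖}
      (jamesConst X) := by
  have : FiniteDimensional ℝ X := Module.finite_of_finrank_pos (zero_lt_one.trans hdim)
  have : Nontrivial X := Module.nontrivial_of_finrank_pos (zero_lt_one.trans hdim)
  obtain ⟨i, y, hy, hiy⟩ : ∃ i y, ‖y‖ = 1 ∧ min ‖v i + y‖ ‖v i - y‖ = jamesConst X := by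
    obtain ⟨x, hx, y, hy, hxy⟩ := exists_mem_extremePoints_min_norm_add_sub_eq_jamesConst X
    obtain ⟨i, rfl | rfl⟩ := hext hx
    · exact ⟨i, y, hy, hxy⟩
    · exact ⟨i, -y, by rwa [norm_neg], by
        rw [← hxy, ← norm_neg (v i + -y), ← norm_neg (v i - -y), neg_add, neg_sub', neg_neg]⟩
  have hpos : 0 < min ‖v i + y‖ ‖v i - y‖ :=
    hiy ▸ jamesConst_pos (by exact_mod_cast Module.lt_rank_of_lt_finrank hdim)
  obtain ⟨w, hw, hvw, hle⟩ := exists_isoscelesOrthogonal_min_le_norm_add (hv i) hy hpos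
  refine ⟨⟨⟨i, ?_⟩, ?_⟩, ⟨⟨i, w, hw, hvw, ?_⟩, ?_⟩⟩
  · exact (hiy.ge.trans (min_norm_add_sub_le_localJamesConst _ hy)).antisymm
      (localJamesConst_le_jamesConst (hv i))
  · rintro r ⟨j, rfl⟩
    exact localJamesConst_le_jamesConst (hv j)
  · exact (hiy.ge.trans hle).antisymm (hvw.norm_add_le_jamesConst (hv i) hw)
  · rintro r ⟨j, u, hu, hju, rfl⟩
    exact hju.norm_add_le_jamesConst (hv j) hu

/-- If `X` is a two-dimensional polyhedral real Banach space whose closed unit ball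
has extreme points exactly `±v₁, …, ±v_m`, then the James constant `J(X)` equals
`max {β(vᵢ) : 1 ≤ i ≤ m}`, which also equals
`max {‖vᵢ + wᵢ‖ : 1 ≤ i ≤ m, wᵢ ∈ S_X, vᵢ ⊥_I wᵢ}`. -/
theorem stmt10 {X : Type*} [NormedAddCommGroup X] [NormedSpace ℝ X] [CompleteSpace X]
    (hdim : Module.finrank ℝ X = 2)
    (m : ℕ) (hm : 0 < m) (v : Fin m → X) (hv : ∀ i, ‖v i‖ = 1)
    (hext : Set.extremePoints ℝ (Metric.closedBall (0 : X) 1)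
      = {x : X | ∃ i, x = v i ∨ x = -v i}) :
    sSup {r : ℝ | ∃ x y : X, ‖x‖ = 1 ∧ ‖y‖ = 1 ∧ r = min ‖x + y‖ ‖x - y‖}
      = sSup {r : ℝ | ∃ i, r = sSup {s : ℝ | ∃ y : X, ‖y‖ = 1 ∧
          s = min ‖v i + y‖ ‖v i - y‖}} ∧
    sSup {r : ℝ | ∃ x y : X, ‖x‖ = 1 ∧ ‖y‖ = 1 ∧ r = min ‖x + y‖ ‖x - y‖}
      = sSup {r : ℝ | ∃ i, ∃ w : X, ‖w‖ = 1 ∧ ‖v i + w‖ = ‖v i - w‖ ∧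
          r = ‖v i + w‖} := by
  obtain ⟨hβ, hI⟩ := stmt10_general (by omega) v hv hext.subset
  exact ⟨hβ.csSup_eq.symm, hI.csSup_eq.symm⟩
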